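/- Let X be a smooth extremal surface of degree q+1 in ℙ³(k) and let L be any line on X. Then the set of lines on X that are skew to L has cardinality exactly q⁴. -/

import Mathlib

open Module

/-! Basic setup: `k` is an algebraically closed field of characteristic `p > 0`,
`q = p^e`.  We model ℙ³(k) via linear subspaces of `k⁴ = Fin 4 → k`:
points, lines and planes of ℙ³(k) are subspaces of dimension 1, 2 and 3
respectively.  A hypersurface cut out by a homogeneous form is recorded by its
affine cone in `k⁴`. -/

/-- The Frobenius form in 4 variables determined by a 4×4 matrix `A`:
`∑ i j, A i j * x i ^ q * x j`, a homogeneous form of degree `q+1`. -/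
def frobForm {k : Type*} [Field k] (q : ℕ) (A : Matrix (Fin 4) (Fin 4) k)
    (x : Fin 4 → k) : k :=
  ∑ i, ∑ j, A i j * x i ^ q * x j

/-- The affine cone in `k⁴` of the extremal surface in ℙ³(k) cut out by the
Frobenius form with matrix `A`; a point of ℙ³(k) lies on the surface iff its
homogeneous coordinate representatives lie in this set. -/
def extremalCone (k : Type*) [Field k] (q : ℕ) (A : Matrix (Fin 4) (Fin 4) k) :
    Set (Fin 4 → k) :=
  {x | frobForm q A x = 0}

/-- A point of ℙ³(k): a 1-dimensional subspace of `k⁴`. -/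
def IsPoint {k : Type*} [Field k] (c : Submodule k (Fin 4 → k)) : Prop :=
  finrank k c = 1

/-- A line of ℙ³(k): a 2-dimensional subspace of `k⁴`. -/
def IsLine {k : Type*} [Field k] (L : Submodule k (Fin 4 → k)) : Prop :=
  finrank k L = 2

/-- A plane of ℙ³(k): a 3-dimensional subspace of `k⁴`. -/
def IsPlane {k : Type*} [Field k] (H : Submodule k (Fin 4 → k)) : Prop :=
  finrank k H = 3

/-- `L` is a line lying on the surface with affine cone `X`. -/
def IsLineOn {k : Type*} [Field k] (X : Set (Fin 4 → k))
    (L : Submodule k (Fin 4 → k)) : Prop :=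
  IsLine L ∧ (L : Set (Fin 4 → k)) ⊆ X

/-- Two lines of ℙ³(k) meet iff the corresponding subspaces of `k⁴` intersect
nontrivially. -/
def MeetsLine {k : Type*} [Field k] (L M : Submodule k (Fin 4 → k)) : Prop :=
  L ⊓ M ≠ ⊥

/-- Two lines of ℙ³(k) are skew iff the corresponding subspaces of `k⁴`
intersect trivially. -/
def SkewLine {k : Type*} [Field k] (L M : Submodule k (Fin 4 → k)) : Prop :=
  L ⊓ M = ⊥

/-- `IsStarAt q X S c`: `S` is a star on the surface with affine cone `X`,
centered at the point `c`, i.e. a set of `q+1` distinct lines on the surface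
all passing through `c`. -/
def IsStarAt {k : Type*} [Field k] (q : ℕ) (X : Set (Fin 4 → k))
    (S : Set (Submodule k (Fin 4 → k))) (c : Submodule k (Fin 4 → k)) : Prop :=
  IsPoint c ∧ S.ncard = q + 1 ∧ ∀ L ∈ S, IsLineOn X L ∧ c ≤ L

/-- `S` is a star on the surface with affine cone `X`. -/
def IsStar {k : Type*} [Field k] (q : ℕ) (X : Set (Fin 4 → k))
    (S : Set (Submodule k (Fin 4 → k))) : Prop :=
  ∃ c, IsStarAt q X S c

/-- `c` is a star point of the surface with affine cone `X`. -/
def IsStarPoint {k : Type*} [Field k] (q : ℕ) (X : Set (Fin 4 → k))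
    (c : Submodule k (Fin 4 → k)) : Prop :=
  ∃ S, IsStarAt q X S c

/-- `H` is a star plane of the surface with affine cone `X`, centered at `c`:
the plane section `X ∩ H` is the union of a star centered at `c`. -/
def IsStarPlaneAt {k : Type*} [Field k] (q : ℕ) (X : Set (Fin 4 → k))
    (H c : Submodule k (Fin 4 → k)) : Prop :=
  IsPlane H ∧ ∃ S, IsStarAt q X S c ∧
    X ∩ (H : Set (Fin 4 → k)) = ⋃ L ∈ S, (L : Set (Fin 4 → k))

/-- An element of `Aut(X)`: since every projective linear automorphism of
ℙ³(k) is represented by an invertible linear map of `k⁴` (uniquely up to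
scalars, which act trivially on subspaces and preserve every cone), `g ∈
PGL(4,k)` with `g(X) = X` corresponds to a linear automorphism of `k⁴`
mapping the affine cone `X` onto itself. -/
def PreservesCone {k : Type*} [Field k] (X : Set (Fin 4 → k))
    (g : (Fin 4 → k) ≃ₗ[k] (Fin 4 → k)) : Prop :=
  (⇑g) '' X = X

/-!
A complement of `L` is the subspace `{x - φ x | x ∈ N}` of a unique linear map
`φ : N → L`, where `N` is a fixed complement. Let `B` be the nondegenerate `q`-sesquilinear form
with `B x x` the Frobenius form. A line lies on the surface iff `B` vanishes identically on it; for
the complement attached to `φ` this says `B (φ x) y + B x (φ y) = B x y` on `N`. The first term is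
`q`-semilinear in `φ` with spanning image, the second is a linear isomorphism in `φ`, because `L`
is isotropic of half the dimension. Up to that isomorphism the equation reads `F φ - φ = c` with
`F` a spanning `q`-semilinear endomorphism of `Hom(N, L)`, and by Lang's theorem `F - 1` is
surjective with kernel of order `q ^ 4`, as `dim Hom(N, L) = 4`. For Lang's theorem, divide out
nonzero fixed vectors one at a time; such a vector is a combination of iterates `F^i v`, whose
coefficients come from a root of a separable polynomial.
-/

section SpanningFamilies

variable {α K W : Type*} [Semiring K] [AddCommMonoid W] [Module K W] {F : α → W}

theorem span_range_comp_eq_top {W' : Type*} [AddCommMonoid W'] [Module K W']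
    (hF : Submodule.span K (Set.range F) = ⊤) {f : W →ₗ[K] W'} (hf : Function.Surjective f) :
    Submodule.span K (Set.range (f ∘ F)) = ⊤ := by
  rw [Set.range_comp, ← Submodule.map_span, hF, Submodule.map_top, LinearMap.range_eq_top.2 hf]

theorem span_range_pi_eq_top {ι : Type*} [Finite ι] {a : α} (ha : F a = 0)
    (hF : Submodule.span K (Set.range F) = ⊤) :
    Submodule.span K (Set.range fun v : ι → α => F ∘ v) = ⊤ := by
  classical
  have := Fintype.ofFinite ι
  rw [eq_top_iff, ← LinearMap.iSup_range_single, iSup_le_iff]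
  intro i
  rw [← Submodule.map_top, ← hF, Submodule.map_span_le]
  rintro _ ⟨x, rfl⟩
  refine Submodule.subset_span ⟨Function.update (fun _ => a) i x, ?_⟩
  funext j
  obtain rfl | hj := eq_or_ne j i <;> simp [*]

end SpanningFamilies

section SpanningSemilinearMaps

variable {K K' V W : Type*} [Field K] [Field K'] {σ : K →+* K'}
  [AddCommGroup V] [Module K V] [AddCommGroup W] [Module K' W] {F : V →ₛₗ[σ] W}

theorem span_range_semilinear_comp_basis {ι : Type*} (hF : Submodule.span K' (Set.range F) = ⊤)
    (b : Basis ι K V) : Submodule.span K' (Set.range (F ∘ b)) = ⊤ := by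
  rw [eq_top_iff, ← hF, Submodule.span_le]
  rintro _ ⟨v, rfl⟩
  rw [← b.linearCombination_repr v, Finsupp.linearCombination_apply, Finsupp.sum, map_sum]
  refine Submodule.sum_mem _ fun i _ => ?_
  rw [map_smulₛₗ]
  exact Submodule.smul_mem _ _ (Submodule.subset_span ⟨i, rfl⟩)

theorem linearIndependent_semilinear_comp [FiniteDimensional K V]
    (hF : Submodule.span K' (Set.range F) = ⊤) (hdim : finrank K V = finrank K' W)
    {ι : Type*} {v : ι → V} (hv : LinearIndependent K v) : LinearIndependent K' (F ∘ v) := by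
  let b := Basis.extend hv.linearIndepOn_id
  have : Fintype _ := FiniteDimensional.fintypeBasisIndex b
  have hb : LinearIndependent K' (F ∘ b) :=
    linearIndependent_of_top_le_span_of_card_eq_finrank
      (span_range_semilinear_comp_basis hF b).ge (by rw [← hdim, finrank_eq_card_basis b])
  let incl (i : ι) : hv.linearIndepOn_id.extend (Set.subset_univ _) :=
    ⟨v i, Basis.subset_extend hv.linearIndepOn_id ⟨i, rfl⟩⟩
  have hincl : F ∘ v = (F ∘ b) ∘ incl := by
    funext i
    simp [b, incl]
  rw [hincl]
  exact hb.comp incl fun i j hij => hv.injective (congrArg Subtype.val hij)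

theorem semilinear_apply_ne_zero [FiniteDimensional K V]
    (hF : Submodule.span K' (Set.range F) = ⊤) (hdim : finrank K V = finrank K' W)
    {v : V} (hv : v ≠ 0) : F v ≠ 0 :=
  (linearIndependent_semilinear_comp hF hdim
    (LinearIndependent.of_subsingleton (v := fun _ : Unit => v) () hv)).ne_zero ()

end SpanningSemilinearMaps

theorem exists_linearIndependent_and_mem_span {K V : Type*} [Field K] [AddCommGroup V] [Module K V]
    [FiniteDimensional K V] (u : ℕ → V) :
    ∃ n, LinearIndependent K (fun i : Fin n => u i) ∧
      u n ∈ Submodule.span K (Set.range fun i : Fin n => u i) := by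
  by_contra! h
  have hu (n : ℕ) : LinearIndependent K (fun i : Fin n => u i) := by
    induction n with
    | zero => exact linearIndependent_empty_type
    | succ n ih => exact linearIndependent_finSucc'.2 ⟨ih, by simpa [Fin.init_def] using h n ih⟩
  simpa using (hu (finrank K V + 1)).fintype_card_le_finrank

section FixedVectorCoefficients

open Polynomial

variable {k : Type*} [Field k]

theorem exists_ne_zero_eval_eq_self [IsSepClosed k] {P : k[X]} (hP : P ≠ 0) (hX : X ^ 2 ∣ P)
    (hder : derivative P = 0) : ∃ t ≠ 0, P.eval t = t := by
  obtain ⟨g, rfl⟩ := hX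
  -- `X ^ 2 * g - X` has derivative `-1`, so its factor `X * g - 1`, which omits the root `0`, is
  -- separable too.
  have hsep : (X * g - 1).Separable := by
    have hsep' : (X ^ 2 * g - X).Separable := by
      rw [separable_def, derivative_sub, hder, derivative_X, zero_sub]
      exact isCoprime_one_right.neg_right
    exact hsep'.of_dvd ⟨X, by ring⟩
  have hg : g ≠ 0 := by rintro rfl; simp at hP
  have hdeg : (X * g - 1).degree ≠ 0 := by
    have hXg : 0 < (X * g).degree := by
      rw [← natDegree_pos_iff_degree_pos, natDegree_X_mul hg]
      exact Nat.succ_pos _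
    rw [← C_1, degree_sub_C hXg]
    exact hXg.ne'
  obtain ⟨t, ht⟩ := IsSepClosed.exists_root _ hdeg hsep
  have htg : t * g.eval t = 1 := by simpa [sub_eq_zero] using ht
  refine ⟨t, left_ne_zero_of_mul_eq_one htg, ?_⟩
  rw [eval_mul, eval_pow, eval_X, sq, mul_assoc, htg, mul_one]

/-- The coefficients of a vector `∑ i, c i • F^i v` fixed by a `q`-semilinear map `F` satisfying
`F^(n+1) v = ∑ i, a i • F^i v` are polynomials in the last coefficient `c n`; these are they. -/
noncomputable def fixedVectorPoly (q : ℕ) {n : ℕ} (a : Fin (n + 1) → k) : Fin (n + 1) → k[X] :=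
  Fin.induction (C (a 0) * X ^ q) fun i P => P ^ q + C (a i.succ) * X ^ q

section FixedVectorPoly

variable {q n : ℕ} (a : Fin (n + 1) → k)

theorem fixedVectorPoly_zero : fixedVectorPoly q a 0 = C (a 0) * X ^ q := rfl

theorem fixedVectorPoly_succ (i : Fin n) :
    fixedVectorPoly q a i.succ = fixedVectorPoly q a i.castSucc ^ q + C (a i.succ) * X ^ q := rfl

theorem X_sq_dvd_fixedVectorPoly (hq : 2 ≤ q) (i : Fin (n + 1)) :
    X ^ 2 ∣ fixedVectorPoly q a i := by
  have hXq : (X ^ 2 : k[X]) ∣ X ^ q := pow_dvd_pow X hq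
  induction i using Fin.induction with
  | zero => exact hXq.mul_left _
  | succ i ih => exact dvd_add (dvd_pow ih (by omega)) (hXq.mul_left _)

theorem derivative_fixedVectorPoly (hq : (q : k) = 0) (i : Fin (n + 1)) :
    derivative (fixedVectorPoly q a i) = 0 := by
  induction i using Fin.induction with
  | zero => simp [fixedVectorPoly_zero, derivative_X_pow, hq]
  | succ i => simp [fixedVectorPoly_succ, derivative_pow, hq]

theorem coeff_fixedVectorPoly (hq : 2 ≤ q) (i : Fin (n + 1)) :
    (fixedVectorPoly q a i).coeff q = a i := by
  induction i using Fin.induction with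
  | zero => simp [fixedVectorPoly_zero]
  | succ i =>
    have hdvd : X ^ (2 * q) ∣ fixedVectorPoly q a i.castSucc ^ q := by
      simpa only [pow_mul] using pow_dvd_pow_of_dvd (X_sq_dvd_fixedVectorPoly a hq i.castSucc) q
    simp [fixedVectorPoly_succ, X_pow_dvd_iff.1 hdvd q (by omega)]

theorem fixedVectorPoly_last_ne_zero (hq : 2 ≤ q) (ha : a ≠ 0) :
    fixedVectorPoly q a (Fin.last n) ≠ 0 := by
  have hvanish (j : Fin (n + 1)) (hj : fixedVectorPoly q a j = 0) (i) (hi : i ≤ j) : a i = 0 := by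
    induction j using Fin.induction with
    | zero => rw [← coeff_fixedVectorPoly a hq, Fin.le_zero_iff.1 hi, hj, coeff_zero]
    | succ j ih =>
      have haj : a j.succ = 0 := by rw [← coeff_fixedVectorPoly a hq, hj, coeff_zero]
      rcases hi.eq_or_lt with rfl | hlt
      · exact haj
      · refine ih (eq_zero_of_pow_eq_zero (n := q) ?_) (Fin.le_castSucc_iff.2 hlt)
        simpa [fixedVectorPoly_succ, haj] using hj
  exact fun h => ha (funext fun i => hvanish _ h i (Fin.le_last i))

end FixedVectorPoly

theorem exists_fixedVector_coeffs [IsSepClosed k] {q n : ℕ} (hq : 2 ≤ q) (hqk : (q : k) = 0)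
    {a : Fin (n + 1) → k} (ha : a ≠ 0) :
    ∃ c : Fin (n + 1) → k, c (Fin.last n) ≠ 0 ∧ c 0 = a 0 * c (Fin.last n) ^ q ∧
      ∀ i : Fin n, c i.succ = c i.castSucc ^ q + a i.succ * c (Fin.last n) ^ q := by
  obtain ⟨t, ht, heval⟩ := exists_ne_zero_eval_eq_self (fixedVectorPoly_last_ne_zero a hq ha)
    (X_sq_dvd_fixedVectorPoly a hq _) (derivative_fixedVectorPoly a hqk _)
  refine ⟨fun i => (fixedVectorPoly q a i).eval t, ?_, ?_, fun i => ?_⟩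
  · exact heval.trans_ne ht
  · simp [heval, fixedVectorPoly_zero]
  · simp [heval, fixedVectorPoly_succ]

end FixedVectorCoefficients

theorem exists_ne_zero_apply_eq_self {k : Type*} [Field k] [IsSepClosed k] {p e : ℕ}
    [Fact p.Prime] [CharP k p] (he : e ≠ 0)
    {V : Type*} [AddCommGroup V] [Module k V] [FiniteDimensional k V] [Nontrivial V]
    {F : V →ₛₗ[iterateFrobenius k p e] V} (hF : Submodule.span k (Set.range F) = ⊤) :
    ∃ w ≠ 0, F w = w := by
  obtain ⟨v, hv⟩ := exists_ne (0 : V)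
  have hu (i : ℕ) : F^[i] v ≠ 0 := by
    induction i with
    | zero => exact hv
    | succ i ih => rw [Function.iterate_succ_apply']; exact semilinear_apply_ne_zero hF rfl ih
  obtain ⟨n, hli, hmem⟩ := exists_linearIndependent_and_mem_span (K := k) fun i => F^[i] v
  obtain ⟨a, ha⟩ := (Submodule.mem_span_range_iff_exists_fun k).1 hmem
  obtain _ | n := n
  · exact absurd ha.symm (by simpa using hu 0)
  have ha0 : a ≠ 0 := by
    rintro rfl
    exact hu (n + 1) (ha.symm.trans (by simp))
  obtain ⟨c, hc, hc0, hcs⟩ := exists_fixedVector_coeffs (q := p ^ e)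
    ((Nat.Prime.two_le Fact.out).trans (Nat.le_self_pow he p)) (by simp [he]) ha0
  refine ⟨∑ i, c i • F^[i] v, fun h => hc (Fintype.linearIndependent_iff.1 hli c h _), ?_⟩
  simp only [map_sum, map_smulₛₗ, iterateFrobenius_def, ← Function.iterate_succ_apply' F]
  rw [Fin.sum_univ_castSucc, Fin.val_last, ← ha, Finset.smul_sum, Fin.sum_univ_succ,
    Fin.sum_univ_succ (fun i => c i • _), hc0]
  simp only [hcs, add_smul, Finset.sum_add_distrib, smul_smul, Fin.val_succ, Fin.val_castSucc]
  simp only [mul_comm (c _ ^ _)]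
  abel

section ExactSequences

variable {A B C : Type*} [AddCommGroup A] [AddCommGroup B] [AddCommGroup C]
  {f : A →+ B} {g : B →+ C} {a : A →+ A} {b : B →+ B} {c : C →+ C}

theorem surjective_of_exact (hfg : Function.Exact f g) (hg : Function.Surjective g)
    (hfab : b.comp f = f.comp a) (hgbc : c.comp g = g.comp b)
    (ha : Function.Surjective a) (hc : Function.Surjective c) : Function.Surjective b := by
  have hg0 (z : C) : (0 : C →+ Unit) z = 0 ↔ z ∈ Set.range g := by simp [hg z]
  exact AddMonoidHom.surjective_of_surjective_of_surjective_of_injective f g (0 : C →+ Unit)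
    f g (0 : C →+ Unit) a b c 0 hfab.symm hgbc.symm rfl hg0 hfg hg0 ha hc
    (Function.injective_of_subsingleton _)

theorem card_ker_of_exact (hf : Function.Injective f) (hfg : Function.Exact f g)
    (hg : Function.Surjective g) (hfab : b.comp f = f.comp a) (hgbc : c.comp g = g.comp b)
    (ha : Function.Surjective a) :
    Nat.card b.ker = Nat.card a.ker * Nat.card c.ker := by
  have hf_comm (x : A) : b (f x) = f (a x) := DFunLike.congr_fun hfab x
  have hg_comm (y : B) : c (g y) = g (b y) := DFunLike.congr_fun hgbc y
  let φ : b.ker →+ c.ker := (g.comp b.ker.subtype).codRestrict c.ker fun y => by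
    rw [AddMonoidHom.mem_ker, AddMonoidHom.comp_apply, hg_comm, AddSubgroup.subtype_apply,
      b.mem_ker.1 y.2, map_zero]
  have hφ : Function.Surjective φ := by
    rintro ⟨z, hz⟩
    obtain ⟨y, rfl⟩ := hg z
    obtain ⟨s, hs⟩ := (hfg (b y)).1 ((hg_comm y).symm.trans hz)
    obtain ⟨r, rfl⟩ := ha s
    refine ⟨⟨y - f r, ?_⟩, Subtype.ext ?_⟩
    · rw [AddMonoidHom.mem_ker, map_sub, hf_comm, hs, sub_self]
    · change g (y - f r) = g y
      rw [map_sub, hfg.apply_apply_eq_zero, sub_zero]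
  let ψ : a.ker → φ.ker := fun x =>
    ⟨⟨f x, by rw [AddMonoidHom.mem_ker, hf_comm, a.mem_ker.1 x.2, map_zero]⟩,
      Subtype.ext (hfg.apply_apply_eq_zero _)⟩
  have hψ : Function.Bijective ψ := by
    refine ⟨fun x y hxy => Subtype.ext (hf (congrArg (fun z => z.1.1) hxy)), ?_⟩
    rintro ⟨⟨y, hy⟩, hφy⟩
    obtain ⟨x, rfl⟩ := (hfg y).1 (congrArg Subtype.val hφy)
    exact ⟨⟨x, hf (by rw [← hf_comm, map_zero]; exact hy)⟩, rfl⟩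
  rw [← φ.ker.card_mul_index, AddSubgroup.index_ker, AddMonoidHom.range_eq_top.2 hφ,
    AddSubgroup.card_top, Nat.card_eq_of_bijective ψ hψ]

end ExactSequences

/-- The Lang map `F - 1` of a semilinear endomorphism `F`, whose kernel is the group of vectors
fixed by `F`. It is only additive, as `F` need not be linear. -/
def langMap {K V : Type*} [Semiring K] {σ : K →+* K} [AddCommGroup V] [Module K V]
    (F : V →ₛₗ[σ] V) : V →+ V :=
  F.toAddMonoidHom - AddMonoidHom.id V

theorem langMap_apply {K V : Type*} [Semiring K] {σ : K →+* K} [AddCommGroup V] [Module K V]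
    (F : V →ₛₗ[σ] V) (v : V) : langMap F v = F v - v := rfl

section LangTheorem

variable {k : Type*} [Field k] [IsSepClosed k] {p e : ℕ} [Fact p.Prime] [CharP k p]

theorem langMap_iterateFrobenius_surjective (he : e ≠ 0) :
    Function.Surjective (langMap (iterateFrobenius k p e).toSemilinearMap) := by
  intro y
  obtain ⟨x, hx⟩ := IsSepClosed.exists_root_C_mul_X_pow_add_C_mul_X_add_C' p (p ^ e) 1 (-1) (-y)
    (dvd_pow_self p he) ((Nat.Prime.two_le Fact.out).trans (Nat.le_self_pow he p))
    (neg_ne_zero.2 one_ne_zero)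
  refine ⟨x, ?_⟩
  change x ^ p ^ e - x = y
  linear_combination hx

open Polynomial in
theorem card_ker_langMap_iterateFrobenius (he : e ≠ 0) :
    Nat.card (langMap (iterateFrobenius k p e).toSemilinearMap).ker = p ^ e := by
  have hp : 1 < p := Nat.Prime.one_lt Fact.out
  have hroots : ((langMap (iterateFrobenius k p e).toSemilinearMap).ker : Set k) =
      (X ^ p ^ e - X : k[X]).rootSet k := by
    ext x
    rw [mem_rootSet, SetLike.mem_coe, AddMonoidHom.mem_ker]
    simp [FiniteField.X_pow_card_pow_sub_X_ne_zero k he hp, langMap_apply, iterateFrobenius_def]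
  have hsep : (X ^ p ^ e - X : k[X]).Separable := by
    simpa [sub_eq_add_neg] using
      separable_C_mul_X_pow_add_C_mul_X_add_C' p (p ^ e) (1 : k) (-1) 0 (dvd_pow_self p he)
        isUnit_one.neg
  rw [← SetLike.coe_sort_coe, hroots, Nat.card_eq_fintype_card, card_rootSet_eq_natDegree hsep
    (IsSepClosed.splits_of_separable _ hsep.map),
    FiniteField.X_pow_card_pow_sub_X_natDegree_eq k he hp]

theorem iterateFrobenius_ne_id (he : e ≠ 0) : iterateFrobenius k p e ≠ RingHom.id k := by
  intro h
  obtain ⟨x, hx⟩ := langMap_iterateFrobenius_surjective (k := k) (p := p) he 1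
  rw [langMap_apply, h] at hx
  simp at hx

theorem langMap_surjective_and_card_ker_of_quotient (he : e ≠ 0) {V : Type*} [AddCommGroup V]
    [Module k V] {F : V →ₛₗ[iterateFrobenius k p e] V} {w : V} (hw : w ≠ 0) (hFw : F w = w)
    {F' : V ⧸ Submodule.span k {w} →ₛₗ[iterateFrobenius k p e] V ⧸ Submodule.span k {w}}
    (hF' : F'.comp (Submodule.span k {w}).mkQ = (Submodule.span k {w}).mkQ.comp F)
    (hsurj : Function.Surjective (langMap F')) :
    Function.Surjective (langMap F) ∧
      Nat.card (langMap F).ker = p ^ e * Nat.card (langMap F').ker := by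
  let f : k →+ V := (LinearMap.toSpanSingleton k V w).toAddMonoidHom
  let g : V →+ V ⧸ Submodule.span k {w} := (Submodule.span k {w}).mkQ.toAddMonoidHom
  have hf : Function.Injective f := smul_left_injective k hw
  have hfg : Function.Exact f g := fun v =>
    (Submodule.Quotient.mk_eq_zero _).trans Submodule.mem_span_singleton
  have hg : Function.Surjective g := Submodule.mkQ_surjective _
  have hf_comm : (langMap F).comp f =
      f.comp (langMap (iterateFrobenius k p e).toSemilinearMap) := by
    ext c
    change F (c • w) - c • w = (iterateFrobenius k p e c - c) • w
    rw [map_smulₛₗ, hFw, sub_smul]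
  have hg_comm : (langMap F').comp g = g.comp (langMap F) := by
    ext v
    exact (congrArg (· - g v) (DFunLike.congr_fun hF' v)).trans (map_sub g _ _).symm
  have hfrob := langMap_iterateFrobenius_surjective (k := k) (p := p) he
  refine ⟨surjective_of_exact hfg hg hf_comm hg_comm hfrob hsurj, ?_⟩
  rw [card_ker_of_exact hf hfg hg hf_comm hg_comm hfrob, card_ker_langMap_iterateFrobenius he]

theorem langMap_surjective_and_card_ker (he : e ≠ 0) {V : Type*} [AddCommGroup V] [Module k V]
    [FiniteDimensional k V] {F : V →ₛₗ[iterateFrobenius k p e] V}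
    (hF : Submodule.span k (Set.range F) = ⊤) :
    Function.Surjective (langMap F) ∧ Nat.card (langMap F).ker = (p ^ e) ^ finrank k V := by
  induction hn : finrank k V generalizing V with
  | zero =>
    have := finrank_zero_iff.1 hn
    exact ⟨fun v => ⟨0, Subsingleton.elim _ _⟩, Nat.card_unique⟩
  | succ n ih =>
    have : Nontrivial V := nontrivial_of_finrank_eq_succ hn
    obtain ⟨w, hw, hFw⟩ := exists_ne_zero_apply_eq_self he hF
    let S := Submodule.span k {w}
    have hS : S ≤ S.comap F := (Submodule.span_singleton_le_iff_mem _ _).2 (by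
      rw [Submodule.mem_comap, hFw]
      exact Submodule.mem_span_singleton_self w)
    have hF' : Submodule.span k (Set.range (S.mapQ S F hS)) = ⊤ :=
      top_unique ((span_range_comp_eq_top hF S.mkQ_surjective).ge.trans
        (Submodule.span_mono (Set.range_comp_subset_range S.mkQ (S.mapQ S F hS))))
    have hdim : finrank k (V ⧸ S) = n := by
      have := S.finrank_quotient_add_finrank
      rw [finrank_span_singleton hw] at this
      omega
    obtain ⟨hsurj, hcard⟩ := ih hF' hdim
    obtain ⟨hsurj', hcard'⟩ := langMap_surjective_and_card_ker_of_quotient he hw hFw rfl hsurj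
    exact ⟨hsurj', by rw [hcard', hcard, pow_succ']⟩

theorem card_semilinear_add_linear_eq (he : e ≠ 0) {V W : Type*} [AddCommGroup V] [Module k V]
    [FiniteDimensional k V] [AddCommGroup W] [Module k W] {G : V →ₛₗ[iterateFrobenius k p e] W}
    (hG : Submodule.span k (Set.range G) = ⊤) {H : V →ₗ[k] W} (hH : Function.Bijective H) (r : W) :
    Nat.card {v // G v + H v = r} = (p ^ e) ^ finrank k V := by
  let H' : V ≃ₗ[k] W := LinearEquiv.ofBijective H hH
  let F : V →ₛₗ[iterateFrobenius k p e] V := (-H'.symm.toLinearMap).comp G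
  have hF : Submodule.span k (Set.range F) = ⊤ :=
    span_range_comp_eq_top (f := -H'.symm.toLinearMap) hG
      (neg_surjective.comp H'.symm.surjective)
  obtain ⟨hsurj, hcard⟩ := langMap_surjective_and_card_ker he hF
  have hsol (v : V) : G v + H v = r ↔ langMap F v = -H'.symm r := by
    change G v + H' v = r ↔ -H'.symm (G v) - v = _
    rw [← neg_add', neg_inj, ← H'.symm.injective.eq_iff, map_add, H'.symm_apply_apply]
  rw [← hcard, ← Nat.card_congr (AddMonoidHom.fiberEquivKerOfSurjective hsurj (-H'.symm r))]
  exact Nat.card_congr (Equiv.subtypeEquivRight hsol)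

end LangTheorem

section Complements

variable {R E : Type*} [Ring R] [AddCommGroup E] [Module R E] {L N : Submodule R E}

/-- The complements of `L`, parametrized by linear maps `φ : N → L` out of a fixed complement `N`:
`φ` corresponds to `{x - φ x | x ∈ N}`, the kernel of the projection onto `L` that restricts to
`φ` on `N`. -/
noncomputable def isComplEquivHom (h : IsCompl L N) : {M // IsCompl L M} ≃ (N →ₗ[R] L) :=
  L.isComplEquivProj.trans
    { toFun f := f.1.domRestrict N
      invFun φ := ⟨LinearMap.ofIsCompl h LinearMap.id φ, LinearMap.ofIsCompl_apply_left h⟩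
      left_inv f := Subtype.ext (LinearMap.ofIsCompl_eq h (fun x => (f.2 x).symm) fun _ => rfl)
      right_inv _ := LinearMap.ext (LinearMap.ofIsCompl_apply_right h) }

theorem mem_isComplEquivHom_symm (h : IsCompl L N) (φ : N →ₗ[R] L) {v : E} :
    v ∈ ((isComplEquivHom h).symm φ).1 ↔ ∃ x : N, (x : E) - φ x = v := by
  change LinearMap.ofIsCompl h LinearMap.id φ v = 0 ↔ _
  constructor
  · obtain ⟨l, x, rfl, -⟩ := Submodule.existsUnique_add_of_isCompl h v
    intro hlx
    have hl : l = -φ x := eq_neg_of_add_eq_zero_left (by simpa using hlx)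
    exact ⟨x, by rw [hl, Submodule.coe_neg, sub_eq_neg_add]⟩
  · rintro ⟨x, rfl⟩
    simp

end Complements

section Sesquilinear

variable {K V : Type*} [Field K] {σ : K →+* K} [AddCommGroup V] [Module K V]
  {B : V →ₛₗ[σ] V →ₗ[K] K} {L M N : Submodule K V}

/-- A subspace `M` is totally isotropic for the sesquilinear form `B` if `B` vanishes on `M × M`. No
symmetry of `B` is assumed. -/
def IsTotallyIsotropic (B : V →ₛₗ[σ] V →ₗ[K] K) (M : Submodule K V) : Prop :=
  ∀ x ∈ M, ∀ y ∈ M, B x y = 0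

theorem isTotallyIsotropic_iff_forall_apply_self_eq_zero (hσ : σ ≠ RingHom.id K) :
    IsTotallyIsotropic B M ↔ ∀ x ∈ M, B x x = 0 := by
  refine ⟨fun hM x hx => hM x hx x hx, fun hM x hx y hy => ?_⟩
  have hpolar (t : K) : t * B x y + σ t * B y x = 0 := by
    have h := hM _ (M.add_mem hx (M.smul_mem t hy))
    simpa [hM x hx, hM y hy] using h
  obtain ⟨t, ht⟩ : ∃ t, σ t ≠ t := by
    contrapose! hσ
    exact RingHom.ext hσ
  have hswap : B x y + B y x = 0 := by simpa using hpolar 1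
  have hmul : (σ t - t) * B x y = 0 := by linear_combination σ t * hswap - hpolar t
  exact (mul_eq_zero.1 hmul).resolve_left (sub_ne_zero.2 ht)

theorem isTotallyIsotropic_isComplEquivHom_symm_iff (hL : IsTotallyIsotropic B L)
    (h : IsCompl L N) (φ : N →ₗ[K] L) :
    IsTotallyIsotropic B ((isComplEquivHom h).symm φ).1 ↔
      ∀ x y : N, B (φ x) y + B x (φ y) = B x y := by
  have hexpand (x y : N) : B (x - φ x) (y - φ y) = B x y - (B (φ x) y + B x (φ y)) := by
    simp only [map_sub, LinearMap.sub_apply, hL (φ x) (φ x).2 (φ y) (φ y).2]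
    ring
  constructor
  · intro hM x y
    rw [eq_comm, ← sub_eq_zero, ← hexpand]
    exact hM _ ((mem_isComplEquivHom_symm h φ).2 ⟨x, rfl⟩) _
      ((mem_isComplEquivHom_symm h φ).2 ⟨y, rfl⟩)
  · intro hφ v hv w hw
    obtain ⟨x, rfl⟩ := (mem_isComplEquivHom_symm h φ).1 hv
    obtain ⟨y, rfl⟩ := (mem_isComplEquivHom_symm h φ).1 hw
    rw [hexpand, hφ, sub_self]

theorem separatingRight_domRestrict₁₂ (hB : B.SeparatingRight)
    (hL : IsTotallyIsotropic B L) (h : IsCompl L N) : (B.domRestrict₁₂ N L).SeparatingRight := by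
  refine fun y hy => Subtype.ext (hB y fun v => ?_)
  obtain ⟨l, x, rfl, -⟩ := Submodule.existsUnique_add_of_isCompl h v
  rw [map_add, LinearMap.add_apply, hL l l.2 y y.2, zero_add]
  exact hy x

theorem injective_pi_llcomp_of_separatingRight {ι U X : Type*} [AddCommGroup U] [Module K U]
    [AddCommGroup X] [Module K X]
    {D : U →ₛₗ[σ] V →ₗ[K] K} (hD : D.SeparatingRight) (b : Basis ι K U) :
    Function.Injective
      (LinearMap.pi fun i => LinearMap.llcomp K X V K (D (b i)) :
        (X →ₗ[K] V) →ₗ[K] (ι → Dual K X)) := by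
  refine (injective_iff_map_eq_zero _).2 fun φ hφ => LinearMap.ext fun x => hD _ fun u => ?_
  have hzero : D.flip (φ x) = 0 := b.ext fun i => DFunLike.congr_fun (congrFun hφ i) x
  exact DFunLike.congr_fun hzero u

variable [FiniteDimensional K V]

theorem span_range_eq_top_of_separatingRight (hB : B.SeparatingRight) :
    Submodule.span K (Set.range B) = ⊤ :=
  Submodule.span_eq_top_of_ne_zero fun z hz => by
    contrapose! hz
    exact hB z fun x => hz (B x) ⟨x, rfl⟩

theorem span_range_domRestrict₁₂_eq_top (hB : B.SeparatingRight) (hL : IsTotallyIsotropic B L)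
    (h : IsCompl L N) (hdim : finrank K L = finrank K N) :
    Submodule.span K (Set.range (B.domRestrict₁₂ L N)) = ⊤ := by
  let b := finBasis K L
  have hli : LinearIndependent K (B ∘ Subtype.val ∘ b) :=
    linearIndependent_semilinear_comp (span_range_eq_top_of_separatingRight hB)
      Subspace.dual_finrank_eq.symm (b.linearIndependent.map' L.subtype L.ker_subtype)
  have hproj : (N.projectionOnto L h.symm).dualMap ∘ (B.domRestrict₁₂ L N ∘ b) =
      B ∘ Subtype.val ∘ b := by
    funext i
    ext v
    obtain ⟨l, x, rfl, -⟩ := Submodule.existsUnique_add_of_isCompl h v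
    simp [LinearMap.domRestrict₁₂_apply, hL _ (b i).2 _ l.2]
  have hli' : LinearIndependent K (B.domRestrict₁₂ L N ∘ b) :=
    LinearIndependent.of_comp (N.projectionOnto L h.symm).dualMap (by rwa [hproj])
  rw [eq_top_iff, ← hli'.span_eq_top_of_card_eq_finrank' (by simp [hdim, Subspace.dual_finrank_eq])]
  exact Submodule.span_mono (Set.range_comp_subset_range b _)

end Sesquilinear

section CountingIsotropicComplements

variable {k : Type*} [Field k] [IsSepClosed k] {p e : ℕ} [Fact p.Prime] [CharP k p]

theorem card_hom_sesquilinear_eq (he : e ≠ 0) {U V : Type*} [AddCommGroup U] [Module k U]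
    [FiniteDimensional k U] [AddCommGroup V] [Module k V] [FiniteDimensional k V]
    (hdim : finrank k U = finrank k V)
    {C : V →ₛₗ[iterateFrobenius k p e] Dual k U} (hC : Submodule.span k (Set.range C) = ⊤)
    {D : U →ₛₗ[iterateFrobenius k p e] Dual k V} (hD : D.SeparatingRight)
    (r : U →ₛₗ[iterateFrobenius k p e] Dual k U) :
    Nat.card {φ : U →ₗ[k] V // ∀ x y, C (φ x) y + D x (φ y) = r x y} =
      (p ^ e) ^ (finrank k U * finrank k V) := by
  let b := finBasis k U
  let G : (U →ₗ[k] V) →ₛₗ[iterateFrobenius k p e] (Fin (finrank k U) → Dual k U) :=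
    { toFun := fun φ i => C (φ (b i))
      map_add' := fun φ ψ => funext fun i => map_add C _ _
      map_smul' := fun c φ => funext fun i => map_smulₛₗ C c _ }
  let H : (U →ₗ[k] V) →ₗ[k] (Fin (finrank k U) → Dual k U) :=
    LinearMap.pi fun i => LinearMap.llcomp k U V k (D (b i))
  have hG : Submodule.span k (Set.range G) = ⊤ := by
    have hG_constr : G ∘ b.constr k = fun v => C ∘ v := by
      funext v i
      exact congrArg C (b.constr_basis k v i)
    rw [← (b.constr k).surjective.range_comp, hG_constr]
    exact span_range_pi_eq_top (map_zero C) hC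
  have hH : Function.Bijective H := by
    have hinj : Function.Injective H := injective_pi_llcomp_of_separatingRight hD b
    refine ⟨hinj, (LinearMap.injective_iff_surjective_of_finrank_eq_finrank ?_).1 hinj⟩
    simp [finrank_linearMap, finrank_pi_fintype, Subspace.dual_finrank_eq, hdim]
  have hiff (φ : U →ₗ[k] V) :
      (∀ x y, C (φ x) y + D x (φ y) = r x y) ↔ G φ + H φ = fun i => r (b i) := by
    refine ⟨fun hφ => funext fun i => LinearMap.ext fun y => hφ (b i) y, fun hφ x y => ?_⟩
    have hext : (C.comp φ) + (LinearMap.lcomp k k φ).comp D = r :=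
      b.ext fun i => congrFun hφ i
    exact DFunLike.congr_fun (DFunLike.congr_fun hext x) y
  rw [Nat.card_congr (Equiv.subtypeEquivRight hiff), card_semilinear_add_linear_eq he hG hH,
    finrank_linearMap]

theorem card_isTotallyIsotropic_isCompl (he : e ≠ 0) {V : Type*} [AddCommGroup V] [Module k V]
    [FiniteDimensional k V] {B : V →ₛₗ[iterateFrobenius k p e] V →ₗ[k] k}
    (hB : B.SeparatingRight) {L : Submodule k V} (hL : IsTotallyIsotropic B L)
    (hdim : finrank k V = 2 * finrank k L) :
    Nat.card {M // IsCompl L M ∧ IsTotallyIsotropic B M} = (p ^ e) ^ (finrank k L ^ 2) := by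
  obtain ⟨N, hN⟩ := L.exists_isCompl
  have hNL : finrank k N = finrank k L := by
    have := Submodule.finrank_add_eq_of_isCompl hN
    omega
  have hcongr : {M // IsCompl L M ∧ IsTotallyIsotropic B M} ≃
      {φ : N →ₗ[k] L // ∀ x y : N, B.domRestrict₁₂ L N (φ x) y + B.domRestrict₁₂ N L x (φ y) =
        B.domRestrict₁₂ N N x y} :=
    (Equiv.subtypeSubtypeEquivSubtypeInter _ _).symm.trans <|
      ((isComplEquivHom hN).symm.subtypeEquiv fun φ =>
        (isTotallyIsotropic_isComplEquivHom_symm_iff hL hN φ).symm).symm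
  rw [Nat.card_congr hcongr, card_hom_sesquilinear_eq he hNL
    (span_range_domRestrict₁₂_eq_top hB hL hN hNL.symm) (separatingRight_domRestrict₁₂ hB hL hN),
    hNL, sq]

end CountingIsotropicComplements

section MatrixForms

theorem separatingRight_toLinearMapₛₗ₂' {R n : Type*} [CommRing R] [Fintype n] [DecidableEq n]
    (σ : R →+* R) {A : Matrix n n R} (hA : IsUnit A) :
    (Matrix.toLinearMapₛₗ₂' R σ (RingHom.id R) A).SeparatingRight := by
  intro y hy
  refine Matrix.mulVec_injective_of_isUnit hA (funext fun i => ?_)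
  have hi := hy (Pi.single i 1)
  simpa [Matrix.toLinearMapₛₗ₂'_apply, Pi.single_apply, apply_ite σ, ite_smul, Matrix.mulVec,
    dotProduct, mul_comm] using hi

/-- The sesquilinear form `(x, y) ↦ ∑ i j, A i j * x i ^ q * y j` with `q = p ^ e`, semilinear in
the first variable; its restriction to the diagonal is the Frobenius form of `A`. -/
noncomputable abbrev frobSesqForm {R n : Type*} [CommRing R] [Fintype n] [DecidableEq n] (p e : ℕ)
    [ExpChar R p] (A : Matrix n n R) :
    (n → R) →ₛₗ[iterateFrobenius R p e] (n → R) →ₗ[R] R :=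
  Matrix.toLinearMapₛₗ₂' R (iterateFrobenius R p e) (RingHom.id R) A

variable {k : Type*} [Field k] {p e : ℕ} [ExpChar k p]

theorem frobForm_eq_frobSesqForm_apply_self (A : Matrix (Fin 4) (Fin 4) k) (x : Fin 4 → k) :
    frobForm (p ^ e) A x = frobSesqForm p e A x x := by
  simp only [frobForm, Matrix.toLinearMapₛₗ₂'_apply, smul_eq_mul, iterateFrobenius_def,
    RingHom.id_apply]
  exact Finset.sum_congr rfl fun i _ => Finset.sum_congr rfl fun j _ => by ring

theorem subset_extremalCone_iff (hσ : iterateFrobenius k p e ≠ RingHom.id k)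
    {A : Matrix (Fin 4) (Fin 4) k} {M : Submodule k (Fin 4 → k)} :
    (M : Set (Fin 4 → k)) ⊆ extremalCone k (p ^ e) A ↔
      IsTotallyIsotropic (frobSesqForm p e A) M := by
  rw [isTotallyIsotropic_iff_forall_apply_self_eq_zero hσ]
  simp only [← frobForm_eq_frobSesqForm_apply_self]
  rfl

end MatrixForms

theorem isLine_and_skewLine_iff_isCompl {k : Type*} [Field k] {L M : Submodule k (Fin 4 → k)}
    (hL : IsLine L) : IsLine M ∧ SkewLine M L ↔ IsCompl L M := by
  have hV : finrank k (Fin 4 → k) = 4 := finrank_fin_fun k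
  rw [IsLine] at hL ⊢
  constructor
  · rintro ⟨hM, hML⟩
    refine (IsCompl.of_eq hML ?_).symm
    have hsum := Submodule.finrank_sup_add_finrank_inf_eq M L
    rw [show M ⊓ L = ⊥ from hML, finrank_bot] at hsum
    exact Submodule.eq_top_of_finrank_eq (by omega)
  · intro h
    have hsum := Submodule.finrank_add_eq_of_isCompl h
    exact ⟨by omega, h.symm.inf_eq_bot⟩

theorem count_lines_skew_to_a_line_general {k : Type*} [Field k] [IsSepClosed k]
    (p e q : ℕ) (hp : p.Prime) (hchar : CharP k p) (he : 1 ≤ e) (hq : q = p ^ e)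
    (A : Matrix (Fin 4) (Fin 4) k) (hA : IsUnit A)
    (L : Submodule k (Fin 4 → k)) (hL : IsLineOn (extremalCone k q A) L) :
    {M : Submodule k (Fin 4 → k) |
        IsLineOn (extremalCone k q A) M ∧ SkewLine M L}.ncard = q ^ 4 := by
  subst hq
  have := Fact.mk hp
  have he0 : e ≠ 0 := Nat.one_le_iff_ne_zero.1 he
  have hL2 : finrank k L = 2 := hL.1
  have hisotropic {M : Submodule k (Fin 4 → k)} :
      (M : Set (Fin 4 → k)) ⊆ extremalCone k (p ^ e) A ↔
        IsTotallyIsotropic (frobSesqForm p e A) M :=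
    subset_extremalCone_iff (iterateFrobenius_ne_id he0)
  have hset (M : Submodule k (Fin 4 → k)) :
      IsLineOn (extremalCone k (p ^ e) A) M ∧ SkewLine M L ↔
        IsCompl L M ∧ IsTotallyIsotropic (frobSesqForm p e A) M := by
    rw [IsLineOn, and_right_comm, isLine_and_skewLine_iff_isCompl hL.1, hisotropic]
  calc
    _ = Nat.card {M // IsCompl L M ∧ IsTotallyIsotropic (frobSesqForm p e A) M} :=
      Nat.card_congr (Equiv.subtypeEquivRight hset)
    _ = (p ^ e) ^ (finrank k L ^ 2) :=
      card_isTotallyIsotropic_isCompl he0 (separatingRight_toLinearMapₛₗ₂' _ hA)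
        (hisotropic.1 hL.2) (by rw [finrank_fin_fun, hL2])
    _ = (p ^ e) ^ 4 := by norm_num [hL2]

/-- Let `X` be a smooth extremal surface of degree `q+1` in
ℙ³(k) and let `L` be any line on `X`.  Then the set of lines on `X` that are
skew to `L` has cardinality exactly `q⁴`. -/
theorem count_lines_skew_to_a_line {k : Type*} [Field k] [IsAlgClosed k]
    (p e q : ℕ) (hp : p.Prime) (hchar : CharP k p) (he : 1 ≤ e) (hq : q = p ^ e)
    (A : Matrix (Fin 4) (Fin 4) k) (hA : IsUnit A)
    (L : Submodule k (Fin 4 → k)) (hL : IsLineOn (extremalCone k q A) L) :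
    {M : Submodule k (Fin 4 → k) |
        IsLineOn (extremalCone k q A) M ∧ SkewLine M L}.ncard = q ^ 4 :=
  count_lines_skew_to_a_line_general p e q hp hchar he hq A hA L hL
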